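/- Let Y* ∈ ℝ^{p×r}_*, X* := Y*Y*ᵀ, κ* := σ_1(Y*)/σ_r(Y*). Let 0 ≤ μ ≤ 1/3 and let Y ∈ ℝ^{p×r}_* satisfy d(Y,Y*) ≤ μσ_r(Y*)/κ*. Then for every θ ∈ ℝ^{p×r} with Yᵀθ symmetric: (2(1 − μ/κ*)² − (14/3)μ)·σ_r(Y*)²·‖θ‖²_F ≤ ‖Yθᵀ + θYᵀ‖²_F + 2⟨YYᵀ − X*, θθᵀ⟩ ≤ (4(σ_1(Y*) + μσ_r(Y*)/κ*)² + (14/3)μ·σ_r(Y*)²)·‖θ‖²_F. In particular, if μ is such that 2(1 − μ/κ*)² − (14/3)μ > 0, then H([Y]) = (1/2)‖YYᵀ − X*‖²_F is geodesically strongly convex and smooth on the region {Y : d(Y,Y*) ≤ μσ_r(Y*)/κ*}. -/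

import Mathlib

open Matrix

/-- Trace inner product `⟨A,B⟩ = tr(AᵀB)`. -/
noncomputable def trInner {m n : ℕ} (A B : Matrix (Fin m) (Fin n) ℝ) : ℝ :=
  ∑ i, ∑ j, A i j * B i j

/-- Frobenius norm. -/
noncomputable def frob {m n : ℕ} (A : Matrix (Fin m) (Fin n) ℝ) : ℝ :=
  Real.sqrt (∑ i, ∑ j, (A i j) ^ 2)

open scoped Classical in
/-- The `i`-th largest eigenvalue (1-indexed, `1 ≤ i ≤ n`) of a Hermitian matrix; junk value 0
otherwise. -/
noncomputable def eigVal {n : ℕ} (A : Matrix (Fin n) (Fin n) ℝ) (i : ℕ) : ℝ :=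
  if hA : A.IsHermitian then
    if h : n - i < n then hA.eigenvalues (Tuple.sort hA.eigenvalues ⟨n - i, h⟩) else 0
  else 0

/-- The `i`-th largest singular value (1-indexed) of `Y`, so `sval Y 1 = ‖Y‖` (spectral norm)
and `sval Y r` is the least singular value. -/
noncomputable def sval {p r : ℕ} (Y : Matrix (Fin p) (Fin r) ℝ) (i : ℕ) : ℝ :=
  Real.sqrt (eigVal (Yᵀ * Y) i)

/-- `Q` is an orthogonal matrix. -/
def IsOrtho {r : ℕ} (Q : Matrix (Fin r) (Fin r) ℝ) : Prop := Qᵀ * Q = 1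

/-- The quotient distance `d(Y₁,Y₂) = min_{Q ∈ O(r)} ‖Y₂Q − Y₁‖_F`. -/
noncomputable def dOrth {p r : ℕ} (Y₁ Y₂ : Matrix (Fin p) (Fin r) ℝ) : ℝ :=
  sInf {c | ∃ Q : Matrix (Fin r) (Fin r) ℝ, IsOrtho Q ∧ c = frob (Y₂ * Q - Y₁)}

/-!
Replace `Y*` by the representative `Z = Y*Q` of its class nearest to `Y`, so that `ZZᵀ = X*` and
`E = Y - Z` has Frobenius norm at most `δ = μσ_r/κ*`. From `YYᵀ - ZZᵀ = ZEᵀ + EZᵀ + EEᵀ`, the inner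
product term of the Hessian is at most `(2σ₁δ + δ²)‖θ‖²` in absolute value, and `σ₁δ = μσ_r²` makes
this at most `(7/3)μσ_r²‖θ‖²`. Moreover `‖Yθᵀ‖` lies between `(σ_r - δ)‖θ‖` and `(σ₁ + δ)‖θ‖`. The
upper bound follows from `‖Yθᵀ + θYᵀ‖ ≤ 2‖Yθᵀ‖`, and the lower bound from the identity
`‖Yθᵀ + θYᵀ‖² = 2‖Yθᵀ‖² + 2‖Yᵀθ‖²`, which holds because `Yᵀθ` is symmetric.
-/

section FrobeniusNorm

open scoped Matrix.Norms.Frobenius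

variable {k m n : Type*} [Fintype k] [Fintype m] [Fintype n]

theorem frobenius_norm_sq_eq_sum (A : Matrix m n ℝ) : ‖A‖ ^ 2 = ∑ i, ∑ j, A i j ^ 2 := by
  have h : 0 ≤ ∑ i, ∑ j, A i j ^ 2 :=
    Finset.sum_nonneg fun _ _ => Finset.sum_nonneg fun _ _ => sq_nonneg _
  simp only [frobenius_norm_def, ← Real.sqrt_eq_rpow, Real.rpow_two, Real.norm_eq_abs, sq_abs,
    Real.sq_sqrt h]

theorem trace_transpose_mul_eq_sum (A B : Matrix m n ℝ) :
    (Aᵀ * B).trace = ∑ i, ∑ j, A i j * B i j := by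
  rw [Finset.sum_comm]
  simp only [trace, diag_apply, mul_apply, transpose_apply]

theorem frobenius_norm_sq_eq_trace (A : Matrix m n ℝ) : ‖A‖ ^ 2 = (Aᵀ * A).trace := by
  simp only [frobenius_norm_sq_eq_sum, trace_transpose_mul_eq_sum, pow_two (A _ _)]

theorem frobenius_norm_mul_sq_eq_trace (Z : Matrix m n ℝ) (A : Matrix n k ℝ) :
    ‖Z * A‖ ^ 2 = (Aᵀ * (Zᵀ * Z) * A).trace := by
  rw [frobenius_norm_sq_eq_trace, transpose_mul]
  simp only [Matrix.mul_assoc]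

theorem abs_trace_transpose_mul_le (A B : Matrix m n ℝ) :
    |(Aᵀ * B).trace| ≤ ‖A‖ * ‖B‖ := by
  refine abs_le_of_sq_le_sq ?_ (by positivity)
  simpa only [mul_pow, frobenius_norm_sq_eq_sum, trace_transpose_mul_eq_sum,
    Fintype.sum_prod_type] using
    Finset.sum_mul_sq_le_sq_mul_sq Finset.univ (fun x : m × n => A x.1 x.2) (fun x => B x.1 x.2)

theorem frobenius_norm_mul_of_transpose_mul_self_eq_one [DecidableEq n] {Q : Matrix m n ℝ}
    (hQ : Qᵀ * Q = 1) (A : Matrix n k ℝ) : ‖Q * A‖ = ‖A‖ := by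
  rw [← sq_eq_sq₀ (norm_nonneg _) (norm_nonneg _), frobenius_norm_sq_eq_trace,
    frobenius_norm_sq_eq_trace, transpose_mul, Matrix.mul_assoc, ← Matrix.mul_assoc Qᵀ, hQ,
    Matrix.one_mul]

theorem frobenius_norm_mul_le_add (Y Z : Matrix m n ℝ) (A : Matrix n k ℝ) :
    ‖Y * A‖ ≤ ‖Z * A‖ + ‖Y - Z‖ * ‖A‖ :=
  calc ‖Y * A‖ = ‖Z * A + (Y - Z) * A‖ := by rw [← Matrix.add_mul, add_sub_cancel]
    _ ≤ ‖Z * A‖ + ‖(Y - Z) * A‖ := norm_add_le _ _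
    _ ≤ ‖Z * A‖ + ‖Y - Z‖ * ‖A‖ := by gcongr; exact frobenius_norm_mul _ _

theorem isCompact_setOf_transpose_mul_self_eq_one [DecidableEq n] :
    IsCompact {Q : Matrix n n ℝ | Qᵀ * Q = 1} := by
  refine Metric.isCompact_of_isClosed_isBounded
    (isClosed_eq (by fun_prop) continuous_const) ?_
  refine isBounded_iff_forall_norm_le.2 ⟨‖(1 : Matrix n n ℝ)‖, fun Q hQ => ?_⟩
  rw [← frobenius_norm_mul_of_transpose_mul_self_eq_one hQ 1, Matrix.mul_one]

end FrobeniusNorm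

theorem posSemidef_transpose_mul_self {m n : Type*} [Fintype m] [Finite n] (Z : Matrix m n ℝ) :
    (Zᵀ * Z).PosSemidef := by
  simpa using posSemidef_conjTranspose_mul_self Z

section LoewnerOrder

open scoped Matrix.Norms.Frobenius MatrixOrder

variable {k m n : Type*} [Fintype k] [Fintype m] [Fintype n]

theorem trace_transpose_mul_mul_mono {G H : Matrix n n ℝ} (h : G ≤ H) (A : Matrix n k ℝ) :
    (Aᵀ * G * A).trace ≤ (Aᵀ * H * A).trace := by
  have := ((Matrix.le_iff.1 h).conjTranspose_mul_mul_same A).trace_nonneg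
  rwa [conjTranspose_eq_transpose_of_trivial, Matrix.mul_sub, Matrix.sub_mul, trace_sub,
    sub_nonneg] at this

theorem trace_transpose_mul_algebraMap_mul [DecidableEq n] (c : ℝ) (A : Matrix n k ℝ) :
    (Aᵀ * algebraMap ℝ (Matrix n n ℝ) c * A).trace = c * ‖A‖ ^ 2 := by
  simp [frobenius_norm_sq_eq_trace, Algebra.algebraMap_eq_smul_one]

end LoewnerOrder

section Eigenvalues

open scoped MatrixOrder

variable {n : ℕ} {A : Matrix (Fin n) (Fin n) ℝ}

theorem eigVal_nonneg (hA : A.PosSemidef) (i : ℕ) : 0 ≤ eigVal A i := by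
  unfold eigVal
  split_ifs
  exacts [hA.eigenvalues_nonneg _, le_rfl, le_rfl]

theorem eigVal_last_le_eigenvalues (hA : A.IsHermitian) (i : Fin n) :
    eigVal A n ≤ hA.eigenvalues i := by
  rw [eigVal, dif_pos hA, dif_pos (by have := i.pos; omega)]
  simpa using Tuple.monotone_sort hA.eigenvalues
    (b := (Tuple.sort hA.eigenvalues).symm i) (by simp [Fin.le_def])

theorem eigenvalues_le_eigVal_one (hA : A.IsHermitian) (i : Fin n) :
    hA.eigenvalues i ≤ eigVal A 1 := by
  rw [eigVal, dif_pos hA, dif_pos (by have := i.pos; omega)]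
  simpa using Tuple.monotone_sort hA.eigenvalues
    (a := (Tuple.sort hA.eigenvalues).symm i) (by simp only [Fin.le_def]; omega)

theorem eigVal_last_le_eigVal_one (A : Matrix (Fin n) (Fin n) ℝ) : eigVal A n ≤ eigVal A 1 := by
  by_cases hA : A.IsHermitian
  · cases n with
    | zero => simp [eigVal]
    | succ n => exact (eigVal_last_le_eigenvalues hA 0).trans (eigenvalues_le_eigVal_one hA 0)
  · simp only [eigVal, dif_neg hA, le_refl]

theorem algebraMap_eigVal_last_le (hA : A.IsHermitian) : algebraMap ℝ _ (eigVal A n) ≤ A := by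
  rw [algebraMap_le_iff_le_spectrum hA.isSelfAdjoint, hA.spectrum_real_eq_range_eigenvalues]
  exact Set.forall_mem_range.2 (eigVal_last_le_eigenvalues hA)

theorem le_algebraMap_eigVal_one (hA : A.IsHermitian) : A ≤ algebraMap ℝ _ (eigVal A 1) := by
  rw [le_algebraMap_iff_spectrum_le hA.isSelfAdjoint, hA.spectrum_real_eq_range_eigenvalues]
  exact Set.forall_mem_range.2 (eigenvalues_le_eigVal_one hA)

end Eigenvalues

section SingularValues

open scoped Matrix.Norms.Frobenius

variable {p r : ℕ} (Z : Matrix (Fin p) (Fin r) ℝ)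

theorem sval_nonneg (i : ℕ) : 0 ≤ sval Z i := Real.sqrt_nonneg _

theorem sq_sval (i : ℕ) : sval Z i ^ 2 = eigVal (Zᵀ * Z) i :=
  Real.sq_sqrt (eigVal_nonneg (posSemidef_transpose_mul_self Z) i)

theorem sval_last_le_sval_one : sval Z r ≤ sval Z 1 :=
  Real.sqrt_le_sqrt (eigVal_last_le_eigVal_one _)

variable {k : Type*} [Fintype k]

theorem sval_last_mul_norm_le (A : Matrix (Fin r) k ℝ) : sval Z r * ‖A‖ ≤ ‖Z * A‖ := by
  refine le_of_sq_le_sq ?_ (norm_nonneg _)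
  rw [mul_pow, sq_sval, ← trace_transpose_mul_algebraMap_mul, frobenius_norm_mul_sq_eq_trace]
  exact trace_transpose_mul_mul_mono
    (algebraMap_eigVal_last_le (posSemidef_transpose_mul_self Z).isHermitian) A

theorem norm_mul_le_sval_one_mul_norm (A : Matrix (Fin r) k ℝ) :
    ‖Z * A‖ ≤ sval Z 1 * ‖A‖ := by
  refine le_of_sq_le_sq ?_ (mul_nonneg (sval_nonneg Z 1) (norm_nonneg _))
  rw [mul_pow, sq_sval, ← trace_transpose_mul_algebraMap_mul, frobenius_norm_mul_sq_eq_trace]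
  exact trace_transpose_mul_mul_mono
    (le_algebraMap_eigVal_one (posSemidef_transpose_mul_self Z).isHermitian) A

end SingularValues

section LiftedHessian

open scoped Matrix.Norms.Frobenius

variable {m n : Type*} [Fintype m] [Fintype n]

/-- The quadratic form `Hess_H(Y)[θ, θ]` of `H([Y]) = ½‖YYᵀ - X‖²_F`, defined for every direction
`θ`; it is the horizontal lift of the Riemannian Hessian when `θ` is horizontal, that is, when
`Yᵀ * θ` is symmetric. The norm is the Frobenius norm. -/
noncomputable def liftedHessian (X : Matrix m m ℝ) (Y θ : Matrix m n ℝ) : ℝ :=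
  ‖Y * θᵀ + θ * Yᵀ‖ ^ 2 + 2 * ((Y * Yᵀ - X)ᵀ * (θ * θᵀ)).trace

theorem frobenius_norm_add_transpose_sq (M : Matrix m m ℝ) :
    ‖M + Mᵀ‖ ^ 2 = 2 * ‖M‖ ^ 2 + 2 * (M * M).trace := by
  have h : (Mᵀ * Mᵀ).trace = (M * M).trace := by rw [← transpose_mul, trace_transpose]
  simp only [frobenius_norm_sq_eq_trace, transpose_add, transpose_transpose, Matrix.add_mul,
    Matrix.mul_add, trace_add, h, trace_mul_comm M Mᵀ]
  ring

theorem frobenius_norm_mul_transpose_add_sq {Y θ : Matrix m n ℝ} (h : (Yᵀ * θ).IsSymm) :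
    ‖Y * θᵀ + θ * Yᵀ‖ ^ 2 = 2 * ‖Y * θᵀ‖ ^ 2 + 2 * ‖Yᵀ * θ‖ ^ 2 := by
  have hsymm : θᵀ * Y = Yᵀ * θ := by simpa only [transpose_mul, transpose_transpose] using h.eq
  have htrace : ((Y * θᵀ) * (Y * θᵀ)).trace = ‖Yᵀ * θ‖ ^ 2 := by
    rw [frobenius_norm_sq_eq_trace, h.eq, ← hsymm, Matrix.mul_assoc, trace_mul_comm]
    simp only [Matrix.mul_assoc]
  simpa only [transpose_mul, transpose_transpose, htrace] using
    frobenius_norm_add_transpose_sq (Y * θᵀ)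

variable {Y Z : Matrix m n ℝ} {s S δ : ℝ}

theorem frobenius_norm_mul_transpose_sub_le (hZ : ∀ A : Matrix n m ℝ, ‖Z * A‖ ≤ S * ‖A‖) :
    ‖Y * Yᵀ - Z * Zᵀ‖ ≤ 2 * S * ‖Y - Z‖ + ‖Y - Z‖ ^ 2 := by
  set E := Y - Z
  have hsplit : Y * Yᵀ - Z * Zᵀ = Z * Eᵀ + (Z * Eᵀ)ᵀ + E * Eᵀ := by
    simp only [E, transpose_sub, transpose_mul, transpose_transpose, Matrix.mul_sub,
      Matrix.sub_mul]
    abel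
  have hZE : ‖Z * Eᵀ‖ ≤ S * ‖E‖ := by simpa only [frobenius_norm_transpose] using hZ Eᵀ
  have hEE : ‖E * Eᵀ‖ ≤ ‖E‖ ^ 2 := by
    simpa only [frobenius_norm_transpose, sq] using frobenius_norm_mul E Eᵀ
  calc ‖Y * Yᵀ - Z * Zᵀ‖ ≤ ‖Z * Eᵀ‖ + ‖(Z * Eᵀ)ᵀ‖ + ‖E * Eᵀ‖ := hsplit ▸ norm_add₃_le
    _ = 2 * ‖Z * Eᵀ‖ + ‖E * Eᵀ‖ := by rw [frobenius_norm_transpose]; ring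
    _ ≤ 2 * S * ‖E‖ + ‖E‖ ^ 2 := by linarith

theorem abs_trace_mul_transpose_sub_le (hZ : ∀ A : Matrix n m ℝ, ‖Z * A‖ ≤ S * ‖A‖) (hS : 0 ≤ S)
    (hYZ : ‖Y - Z‖ ≤ δ) (θ : Matrix m n ℝ) :
    |((Y * Yᵀ - Z * Zᵀ)ᵀ * (θ * θᵀ)).trace| ≤ (2 * S * δ + δ ^ 2) * ‖θ‖ ^ 2 := by
  have hθ : ‖θ * θᵀ‖ ≤ ‖θ‖ ^ 2 := by
    simpa only [frobenius_norm_transpose, sq] using frobenius_norm_mul θ θᵀ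
  have : 0 ≤ δ := (norm_nonneg _).trans hYZ
  calc _ ≤ ‖Y * Yᵀ - Z * Zᵀ‖ * ‖θ * θᵀ‖ := abs_trace_transpose_mul_le _ _
    _ ≤ (2 * S * ‖Y - Z‖ + ‖Y - Z‖ ^ 2) * ‖θ‖ ^ 2 := by
      gcongr
      exact frobenius_norm_mul_transpose_sub_le hZ
    _ ≤ (2 * S * δ + δ ^ 2) * ‖θ‖ ^ 2 := by gcongr

theorem le_liftedHessian (hs : ∀ A : Matrix n m ℝ, s * ‖A‖ ≤ ‖Z * A‖)
    (hS : ∀ A : Matrix n m ℝ, ‖Z * A‖ ≤ S * ‖A‖) (hS₀ : 0 ≤ S) (hYZ : ‖Y - Z‖ ≤ δ) (hδ : δ ≤ s)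
    {θ : Matrix m n ℝ} (hθ : (Yᵀ * θ).IsSymm) :
    (2 * (s - δ) ^ 2 - 2 * (2 * S * δ + δ ^ 2)) * ‖θ‖ ^ 2 ≤ liftedHessian (Z * Zᵀ) Y θ := by
  have hYθ : (s - δ) * ‖θ‖ ≤ ‖Y * θᵀ‖ := by
    have hZθ := hs θᵀ
    have hle := frobenius_norm_mul_le_add Z Y θᵀ
    rw [frobenius_norm_transpose] at hZθ hle
    rw [norm_sub_rev] at hle
    linarith [mul_le_mul_of_nonneg_right hYZ (norm_nonneg θ)]
  have hsq : ((s - δ) * ‖θ‖) ^ 2 ≤ ‖Y * θᵀ‖ ^ 2 :=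
    pow_le_pow_left₀ (mul_nonneg (sub_nonneg.2 hδ) (norm_nonneg _)) hYθ 2
  have htrace := neg_le_of_abs_le (abs_trace_mul_transpose_sub_le hS hS₀ hYZ θ)
  rw [liftedHessian, frobenius_norm_mul_transpose_add_sq hθ]
  linarith [sq_nonneg ‖Yᵀ * θ‖]

theorem liftedHessian_le (hS : ∀ A : Matrix n m ℝ, ‖Z * A‖ ≤ S * ‖A‖) (hS₀ : 0 ≤ S)
    (hYZ : ‖Y - Z‖ ≤ δ) (θ : Matrix m n ℝ) :
    liftedHessian (Z * Zᵀ) Y θ ≤ (4 * (S + δ) ^ 2 + 2 * (2 * S * δ + δ ^ 2)) * ‖θ‖ ^ 2 := by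
  have hYθ : ‖Y * θᵀ‖ ≤ (S + δ) * ‖θ‖ := by
    have hZθ := hS θᵀ
    have hle := frobenius_norm_mul_le_add Y Z θᵀ
    rw [frobenius_norm_transpose] at hZθ hle
    linarith [mul_le_mul_of_nonneg_right hYZ (norm_nonneg θ)]
  have hsum : ‖Y * θᵀ + θ * Yᵀ‖ ≤ 2 * ((S + δ) * ‖θ‖) := by
    have hsymm : ‖θ * Yᵀ‖ = ‖Y * θᵀ‖ := by
      rw [← frobenius_norm_transpose, transpose_mul, transpose_transpose]
    linarith [norm_add_le (Y * θᵀ) (θ * Yᵀ)]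
  have hsq := pow_le_pow_left₀ (norm_nonneg _) hsum 2
  have htrace := le_of_abs_le (abs_trace_mul_transpose_sub_le hS hS₀ hYZ θ)
  rw [liftedHessian]
  linarith

end LiftedHessian

section QuotientDistance

open scoped Matrix.Norms.Frobenius

theorem frob_eq_norm {m n : ℕ} (A : Matrix (Fin m) (Fin n) ℝ) : frob A = ‖A‖ := by
  rw [frob, ← frobenius_norm_sq_eq_sum, Real.sqrt_sq (norm_nonneg _)]

theorem trInner_eq_trace {m n : ℕ} (A B : Matrix (Fin m) (Fin n) ℝ) :
    trInner A B = (Aᵀ * B).trace :=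
  (trace_transpose_mul_eq_sum A B).symm

variable {p r : ℕ} {Y Ystar : Matrix (Fin p) (Fin r) ℝ} {δ : ℝ}

theorem exists_isOrtho_norm_sub_eq_dOrth (Y₁ Y₂ : Matrix (Fin p) (Fin r) ℝ) :
    ∃ Q : Matrix (Fin r) (Fin r) ℝ, IsOrtho Q ∧ ‖Y₁ - Y₂ * Q‖ = dOrth Y₁ Y₂ := by
  obtain ⟨Q, hQ, hmin⟩ := isCompact_setOf_transpose_mul_self_eq_one.exists_isMinOn
    ⟨1, by simp⟩ (f := fun Q : Matrix (Fin r) (Fin r) ℝ => ‖Y₂ * Q - Y₁‖) (by fun_prop)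
  have hleast : IsLeast {c | ∃ Q : Matrix (Fin r) (Fin r) ℝ,
      IsOrtho Q ∧ c = frob (Y₂ * Q - Y₁)} ‖Y₂ * Q - Y₁‖ := by
    refine ⟨⟨Q, hQ, (frob_eq_norm _).symm⟩, ?_⟩
    rintro _ ⟨Q', hQ', rfl⟩
    rw [frob_eq_norm]
    exact hmin hQ'
  exact ⟨Q, hQ, by rw [norm_sub_rev, dOrth, hleast.csInf_eq]⟩

theorem exists_mul_transpose_eq_of_dOrth_le (hd : dOrth Y Ystar ≤ δ) :
    ∃ Z : Matrix (Fin p) (Fin r) ℝ, Z * Zᵀ = Ystar * Ystarᵀ ∧ ‖Y - Z‖ ≤ δ ∧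
      ∀ A : Matrix (Fin r) (Fin p) ℝ,
        sval Ystar r * ‖A‖ ≤ ‖Z * A‖ ∧ ‖Z * A‖ ≤ sval Ystar 1 * ‖A‖ := by
  obtain ⟨Q, hQ, hdist⟩ := exists_isOrtho_norm_sub_eq_dOrth Y Ystar
  refine ⟨Ystar * Q, ?_, hdist.trans_le hd, fun A => ?_⟩
  · rw [transpose_mul, Matrix.mul_assoc, ← Matrix.mul_assoc Q, mul_eq_one_comm.1 hQ,
      Matrix.one_mul]
  · rw [Matrix.mul_assoc, ← frobenius_norm_mul_of_transpose_mul_self_eq_one hQ A]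
    exact ⟨sval_last_mul_norm_le _ _, norm_mul_le_sval_one_mul_norm _ _⟩

theorem le_liftedHessian_of_dOrth_le (hd : dOrth Y Ystar ≤ δ) (hδ : δ ≤ sval Ystar r)
    {θ : Matrix (Fin p) (Fin r) ℝ} (hθ : (Yᵀ * θ).IsSymm) :
    (2 * (sval Ystar r - δ) ^ 2 - 2 * (2 * sval Ystar 1 * δ + δ ^ 2)) * ‖θ‖ ^ 2 ≤
      liftedHessian (Ystar * Ystarᵀ) Y θ := by
  obtain ⟨Z, hgram, hYZ, hZ⟩ := exists_mul_transpose_eq_of_dOrth_le hd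
  exact hgram ▸
    le_liftedHessian (fun A => (hZ A).1) (fun A => (hZ A).2) (sval_nonneg _ _) hYZ hδ hθ

theorem liftedHessian_le_of_dOrth_le (hd : dOrth Y Ystar ≤ δ) (θ : Matrix (Fin p) (Fin r) ℝ) :
    liftedHessian (Ystar * Ystarᵀ) Y θ ≤
      (4 * (sval Ystar 1 + δ) ^ 2 + 2 * (2 * sval Ystar 1 * δ + δ ^ 2)) * ‖θ‖ ^ 2 := by
  obtain ⟨Z, hgram, hYZ, hZ⟩ := exists_mul_transpose_eq_of_dOrth_le hd
  exact hgram ▸ liftedHessian_le (fun A => (hZ A).2) (sval_nonneg _ _) hYZ θ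

end QuotientDistance

section Radius

-- Here `s = σ_r(Y*)` and `S = σ_1(Y*)`, so that `μ * s / (S / s)` is the radius `μ σ_r(Y*) / κ*`;
-- for `s = 0` it is the junk value `0`.

variable {s S μ : ℝ}

theorem mul_div_div_le_mul (hs : 0 ≤ s) (hsS : s ≤ S) (hμ : 0 ≤ μ) : μ * s / (S / s) ≤ μ * s := by
  rcases hs.eq_or_lt with rfl | hs
  · simp
  · exact div_le_self (by positivity) ((one_le_div hs).2 hsS)

theorem two_mul_radius_add_sq_le (hs : 0 ≤ s) (hsS : s ≤ S) (hμ : 0 ≤ μ) (hμ' : μ ≤ 1 / 3) :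
    2 * S * (μ * s / (S / s)) + (μ * s / (S / s)) ^ 2 ≤ 7 / 3 * μ * s ^ 2 := by
  have hlin : S * (μ * s / (S / s)) = μ * s ^ 2 := by
    rcases hs.eq_or_lt with rfl | hs
    · simp
    · have := hs.trans_le hsS
      field_simp
  have hsq : (μ * s / (S / s)) ^ 2 ≤ (μ * s) ^ 2 :=
    pow_le_pow_left₀ (by have := hs.trans hsS; positivity) (mul_div_div_le_mul hs hsS hμ) 2
  have hμsq : (μ * s) ^ 2 ≤ 1 / 3 * μ * s ^ 2 := by
    rw [mul_pow, sq μ]; gcongr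
  linarith

end Radius

/-- local geodesic strong convexity of `H`: two-sided bounds on the lifted
Riemannian Hessian quadratic form of `H` in the region at quotient distance at most
`μ σ_r(Ystar)/κstar` from `Ystar`. -/
theorem stmt8 {p r : ℕ} (Ystar : Matrix (Fin p) (Fin r) ℝ) (hYs : Ystar.rank = r)
    (X : Matrix (Fin p) (Fin p) ℝ) (hX : X = Ystar * Ystarᵀ)
    (κ : ℝ) (hκ : κ = sval Ystar 1 / sval Ystar r)
    (μ : ℝ) (hμ0 : 0 ≤ μ) (hμ1 : μ ≤ 1 / 3)
    (Y : Matrix (Fin p) (Fin r) ℝ) (hY : Y.rank = r)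
    (hd : dOrth Y Ystar ≤ μ * sval Ystar r / κ) :
    ∀ θ : Matrix (Fin p) (Fin r) ℝ, (Yᵀ * θ).IsSymm →
      (2 * (1 - μ / κ) ^ 2 - (14 / 3) * μ) * (sval Ystar r) ^ 2 * (frob θ) ^ 2 ≤
        (frob (Y * θᵀ + θ * Yᵀ)) ^ 2 + 2 * trInner (Y * Yᵀ - X) (θ * θᵀ) ∧
      (frob (Y * θᵀ + θ * Yᵀ)) ^ 2 + 2 * trInner (Y * Yᵀ - X) (θ * θᵀ) ≤
        (4 * (sval Ystar 1 + μ * sval Ystar r / κ) ^ 2 +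
          (14 / 3) * μ * (sval Ystar r) ^ 2) * (frob θ) ^ 2 := by
  intro θ hθ
  subst hX hκ
  have hs := sval_nonneg Ystar r
  have hsS := sval_last_le_sval_one Ystar
  have hδs := (mul_div_div_le_mul hs hsS hμ0).trans
    (mul_le_of_le_one_left hs (hμ1.trans (by norm_num)))
  have hpert := two_mul_radius_add_sq_le hs hsS hμ0 hμ1
  have hlower := le_liftedHessian_of_dOrth_le hd hδs hθ
  have hupper := liftedHessian_le_of_dOrth_le hd θ
  simp only [frob_eq_norm, trInner_eq_trace]
  constructor
  · refine le_trans (mul_le_mul_of_nonneg_right ?_ (sq_nonneg _)) hlower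
    linear_combination 2 * hpert
  · refine hupper.trans (mul_le_mul_of_nonneg_right ?_ (sq_nonneg _))
    linear_combination 2 * hpert
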